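/- Upper bound to the random Schmidt robustness: let d ≥ 2, 1 ≤ n < d, and let ψ = Σ_i a_i |ii⟩ be a unit vector with ordered coefficients a_1 ≥ a_2 ≥ … ≥ a_d ≥ 0 and Σ_i a_i² = 1. Then the matrix ψψ† + (a_1 a_2 (d−n)/(dn−1)) · 𝟙 on ℂ^d ⊗ ℂ^d has Schmidt number at most n. -/

import Mathlib

open Matrix BigOperators Kronecker ComplexOrder

/-- The d×d matrix `M_v` associated with a vector `v` on ℂ^d ⊗ ℂ^d, `(M_v)_{ij} = v (i,j)`. -/
def toMat (d : ℕ) (v : Fin d × Fin d → ℂ) : Matrix (Fin d) (Fin d) ℂ :=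
  Matrix.of fun i j => v (i, j)

/-- `ρ` has Schmidt number at most `n`: it is a finite sum of `w wᴴ` with each `w` of
Schmidt rank (i.e. rank of the associated d×d matrix) at most `n`. -/
def SchmidtNumberLE (d : ℕ) (ρ : Matrix (Fin d × Fin d) (Fin d × Fin d) ℂ) (n : ℕ) : Prop :=
  ∃ (k : ℕ) (w : Fin k → (Fin d × Fin d → ℂ)),
    (∀ i, (toMat d (w i)).rank ≤ n) ∧
    ρ = ∑ i, Matrix.vecMulVec (w i) (star (w i))

/-- The vector `Σ_i a_i |ii⟩`. -/
noncomputable def ketDiag (d : ℕ) (a : Fin d → ℝ) : Fin d × Fin d → ℂ :=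
  fun p => if p.1 = p.2 then ((a p.1 : ℝ) : ℂ) else 0

/-!
Averaging `w wᴴ` over the phases `D ⊗ conj D`, with `D` diagonal unitary, keeps only the entries
`⟨ii|ρ|jj⟩` and `⟨ij|ρ|ij⟩`. A vector whose matrix `M` has rank at most `n` thus puts the pair
`(M i i * conj (M j j), ‖M i j‖ ^ 2)` into a convex cone of pairs `(G, F)`, and the target becomes
such a pair as well, with `F` constant. For the Gram matrix `M` of `d` unit vectors of `ℂ^n`, one
has `G = 1`, and `F` consists of the squared overlaps, which may be averaged over permutations.

Write `c = (d - n) / (d * n - 1)`. A flat frame, mixed with the uniform superpositions of `n` of the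
`|ii⟩`, yields `F = c` at the price of an extra `c` on the diagonal of `G`. Alternatively, one
pinned vector can have squared overlap `c` with each of the others, whose mutual squared overlaps
are then at most `2 * c` on average, and nothing is added to `G`. Mixing these two with weights `t`
and `1 - t`, where `t = a₂ / a₁`, and applying the local filter `√a ⊗ √a` proves the bound: the
entries of `F` away from the pinned index become at most
`a₂ ^ 2 * (2 - t) * c = a₁ * a₂ * c * (t * (2 - t)) ≤ a₁ * a₂ * c`.
-/

section PermutationAverage

variable {α : Type*} [Fintype α]

lemma expect_offDiag (f : α → α → ℝ) :
    𝔼 p ∈ Finset.univ.offDiag, f p.1 p.2 =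
      (∑ a, ∑ b, f a b - ∑ a, f a a) / (Fintype.card α * (Fintype.card α - 1)) := by
  classical
  have hsum : ∑ p ∈ Finset.univ.offDiag, f p.1 p.2 = ∑ a, ∑ b, f a b - ∑ a, f a a := by
    rw [eq_sub_iff_add_eq', ← Fintype.sum_prod_type', ← Finset.univ_product_univ,
      ← Finset.diag_union_offDiag, Finset.sum_union (Finset.disjoint_diag_offDiag _),
      Finset.sum_diag]
  rw [Finset.expect_eq_sum_div_card, hsum, Finset.offDiag_card, Nat.cast_sub (Nat.le_mul_self _)]
  simp [mul_sub]

variable [DecidableEq α]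

lemma expect_perm_apply (f : α → ℝ) (i : α) :
    𝔼 σ : Equiv.Perm α, f (σ i) = 𝔼 a, f a := by
  have : Nonempty α := ⟨i⟩
  have index_irrelevant (j : α) :
      𝔼 σ : Equiv.Perm α, f (σ j) = 𝔼 σ : Equiv.Perm α, f (σ i) :=
    Fintype.expect_equiv (Equiv.mulRight (Equiv.swap i j)) _ _ fun σ => by simp
  calc 𝔼 σ : Equiv.Perm α, f (σ i)
      = 𝔼 j, 𝔼 σ : Equiv.Perm α, f (σ j) := by
        simp only [index_irrelevant, Fintype.expect_const]
    _ = 𝔼 σ : Equiv.Perm α, 𝔼 j, f (σ j) := Finset.expect_comm _ _ _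
    _ = 𝔼 a, f a := by
        have reindex (σ : Equiv.Perm α) : 𝔼 j, f (σ j) = 𝔼 a, f a :=
          Fintype.expect_equiv σ _ _ fun _ => rfl
        simp only [reindex, Fintype.expect_const]

lemma expect_perm_apply_apply (f : α → α → ℝ) {i j : α} (hij : i ≠ j) :
    𝔼 σ : Equiv.Perm α, f (σ i) (σ j) = 𝔼 p ∈ Finset.univ.offDiag, f p.1 p.2 := by
  have hne : (Finset.univ : Finset α).offDiag.Nonempty := ⟨(i, j), by simpa using hij⟩
  have index_irrelevant : ∀ p ∈ (Finset.univ : Finset α).offDiag,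
      𝔼 σ : Equiv.Perm α, f (σ p.1) (σ p.2) = 𝔼 σ : Equiv.Perm α, f (σ i) (σ j) := by
    rintro ⟨k, l⟩ hkl
    have hkl : k ≠ l := by simpa using hkl
    let τ := Equiv.swap (Equiv.swap i k j) l * Equiv.swap i k
    have hτi : τ i = k := by
      have : k ≠ Equiv.swap i k j := by
        rw [ne_comm, Ne, Equiv.swap_apply_eq_iff]
        simpa using hij.symm
      simp [τ, Equiv.swap_apply_of_ne_of_ne this hkl]
    have hτj : τ j = l := by simp [τ]
    exact Fintype.expect_equiv (Equiv.mulRight τ) _ _ fun σ => by simp [hτi, hτj]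
  calc 𝔼 σ : Equiv.Perm α, f (σ i) (σ j)
      = 𝔼 p ∈ Finset.univ.offDiag, 𝔼 σ : Equiv.Perm α, f (σ p.1) (σ p.2) := by
        rw [Finset.expect_congr rfl index_irrelevant, Finset.expect_const hne]
    _ = 𝔼 σ : Equiv.Perm α, 𝔼 p ∈ Finset.univ.offDiag, f (σ p.1) (σ p.2) :=
        Finset.expect_comm _ _ _
    _ = 𝔼 p ∈ Finset.univ.offDiag, f p.1 p.2 := by
        have reindex (σ : Equiv.Perm α) : 𝔼 p ∈ Finset.univ.offDiag, f (σ p.1) (σ p.2) =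
            𝔼 p ∈ Finset.univ.offDiag, f p.1 p.2 :=
          Finset.expect_equiv (Equiv.prodCongr σ σ) (by simp) fun _ _ => rfl
        simp only [reindex, Fintype.expect_const]

end PermutationAverage

section Frame

variable {α κ : Type*} [Fintype α] [Fintype κ]

lemma trace_mul_conjTranspose_self_eq_sum_norm_sq (A : Matrix α κ ℂ) :
    (A * Aᴴ).trace = ((∑ a, ∑ k, ‖A a k‖ ^ 2 : ℝ) : ℂ) := by
  simp [Matrix.trace, Matrix.mul_apply, Complex.mul_conj']

lemma sum_norm_sq_mul_conjTranspose_self (A : Matrix α κ ℂ) :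
    ∑ a, ∑ b, ‖(A * Aᴴ) a b‖ ^ 2 = ∑ k, ∑ l, ‖(Aᴴ * A) k l‖ ^ 2 := by
  rw [← Complex.ofReal_inj, ← trace_mul_conjTranspose_self_eq_sum_norm_sq,
    ← trace_mul_conjTranspose_self_eq_sum_norm_sq, conjTranspose_mul, conjTranspose_mul,
    conjTranspose_conjTranspose, ← Matrix.mul_assoc, trace_mul_comm, Matrix.mul_assoc,
    Matrix.mul_assoc]

variable [DecidableEq κ]

/-- The columns of `X` are pairwise orthogonal, and all entries of the `k`-th one have squared
modulus `μ k`. For a probability vector `μ`, the rows of `X` are then unit vectors of `ℂ^κ` whose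
overlaps are, on average, as small as the weights `μ` allow. -/
structure IsFlatFrame (X : Matrix α κ ℂ) (μ : κ → ℝ) : Prop where
  norm_sq_apply : ∀ a k, ‖X a k‖ ^ 2 = μ k
  conjTranspose_mul_self : Xᴴ * X = diagonal fun k => ((Fintype.card α * μ k : ℝ) : ℂ)

lemma exists_isFlatFrame_one [Nonempty α] (h : Fintype.card κ ≤ Fintype.card α) :
    ∃ U : Matrix α κ ℂ, IsFlatFrame U 1 := by
  set m := Fintype.card α
  have : NeZero m := ⟨Fintype.card_ne_zero⟩
  let e : α ≃ ZMod m := Fintype.equivOfCardEq (ZMod.card m).symm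
  obtain ⟨ι⟩ : Nonempty (κ ↪ ZMod m) :=
    Function.Embedding.nonempty_of_card_le (by rwa [ZMod.card])
  refine ⟨of fun a k => ZMod.stdAddChar (e a * ι k), fun a k => ?_, ?_⟩
  · simp [AddChar.norm_apply]
  · ext k l
    have entry (a : α) : star (ZMod.stdAddChar (e a * ι k)) * ZMod.stdAddChar (e a * ι l) =
        (ZMod.stdAddChar (e a * (ι l - ι k)) : ℂ) := by
      rw [RCLike.star_def, ← AddChar.map_neg_eq_conj, ← AddChar.map_add_eq_mul]
      congr 1
      ring
    simp only [mul_apply, conjTranspose_apply, of_apply, entry]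
    rw [e.sum_comp fun x => (ZMod.stdAddChar (x * (ι l - ι k)) : ℂ),
      AddChar.sum_mulShift _ (ZMod.isPrimitive_stdAddChar m), ZMod.card, diagonal_apply]
    simp only [sub_eq_zero, ι.injective.eq_iff, eq_comm (a := l)]
    simp [m]

lemma exists_isFlatFrame [Nonempty α] (h : Fintype.card κ ≤ Fintype.card α) {μ : κ → ℝ}
    (hμ : ∀ k, 0 ≤ μ k) : ∃ X : Matrix α κ ℂ, IsFlatFrame X μ := by
  obtain ⟨U, hU⟩ := exists_isFlatFrame_one (α := α) h
  refine ⟨U * diagonal fun k => ((√(μ k) : ℝ) : ℂ), fun a k => ?_, ?_⟩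
  · simp [mul_diagonal, mul_pow, hU.norm_sq_apply, Real.sq_sqrt (hμ k)]
  · rw [conjTranspose_mul, Matrix.mul_assoc, ← Matrix.mul_assoc Uᴴ, hU.conjTranspose_mul_self,
      diagonal_conjTranspose, diagonal_mul_diagonal, diagonal_mul_diagonal]
    congr 1
    ext k
    simp only [Pi.star_apply, Pi.one_apply, RCLike.star_def, Complex.conj_ofReal,
      ← Complex.ofReal_mul]
    rw [mul_one, mul_left_comm, Real.mul_self_sqrt (hμ k)]

namespace IsFlatFrame

variable {X : Matrix α κ ℂ} {μ : κ → ℝ}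

lemma mul_conjTranspose_self_apply_self (hX : IsFlatFrame X μ) (a : α) :
    (X * Xᴴ) a a = ((∑ k, μ k : ℝ) : ℂ) := by
  simp [mul_apply, Complex.mul_conj', ← hX.norm_sq_apply a]

lemma sum_norm_sq_mul_conjTranspose_self (hX : IsFlatFrame X μ) :
    ∑ a, ∑ b, ‖(X * Xᴴ) a b‖ ^ 2 = (Fintype.card α : ℝ) ^ 2 * ∑ k, μ k ^ 2 := by
  rw [_root_.sum_norm_sq_mul_conjTranspose_self, hX.conjTranspose_mul_self, Finset.mul_sum]
  refine Finset.sum_congr rfl fun k _ => ?_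
  rw [Finset.sum_eq_single_of_mem k (Finset.mem_univ k) fun l _ hl => by simp [hl.symm]]
  simp [mul_pow]

lemma expect_perm_norm_sq [DecidableEq α] (hX : IsFlatFrame X μ) (hμ : ∑ k, μ k = 1) {i j : α}
    (hij : i ≠ j) :
    𝔼 σ : Equiv.Perm α, ‖(X * Xᴴ) (σ i) (σ j)‖ ^ 2 =
      (Fintype.card α * ∑ k, μ k ^ 2 - 1) / (Fintype.card α - 1) := by
  have hcard : (Fintype.card α : ℝ) ≠ 0 := by
    have : Nonempty α := ⟨i⟩
    exact_mod_cast Fintype.card_ne_zero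
  rw [expect_perm_apply_apply (fun a b => ‖(X * Xᴴ) a b‖ ^ 2) hij,
    expect_offDiag fun a b => ‖(X * Xᴴ) a b‖ ^ 2, hX.sum_norm_sq_mul_conjTranspose_self]
  simp only [hX.mul_conjTranspose_self_apply_self, hμ, Complex.ofReal_one, norm_one, one_pow,
    Finset.sum_const, Finset.card_univ, nsmul_eq_mul, mul_one]
  rw [show (Fintype.card α : ℝ) ^ 2 * ∑ k, μ k ^ 2 - Fintype.card α =
    Fintype.card α * (Fintype.card α * ∑ k, μ k ^ 2 - 1) by ring, mul_div_mul_left _ _ hcard]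

end IsFlatFrame

end Frame

section SchmidtCone

variable {d n : ℕ}

lemma SchmidtNumberLE.vecMulVec_self_star {w : Fin d × Fin d → ℂ} (hw : (toMat d w).rank ≤ n) :
    SchmidtNumberLE d (vecMulVec w (star w)) n :=
  ⟨1, fun _ => w, fun _ => hw, by simp⟩

lemma toMat_kronecker_mulVec (A B : Matrix (Fin d) (Fin d) ℂ) (w : Fin d × Fin d → ℂ) :
    toMat d ((A ⊗ₖ B) *ᵥ w) = A * toMat d w * Bᵀ := by
  ext i j
  simp only [toMat, of_apply, mulVec, dotProduct, kroneckerMap_apply, Fintype.sum_prod_type,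
    mul_apply, transpose_apply, Finset.sum_mul]
  rw [Finset.sum_comm]
  exact Finset.sum_congr rfl fun l _ => Finset.sum_congr rfl fun k _ => by ring

lemma SchmidtNumberLE.kronecker_mul_mul_conjTranspose
    {ρ : Matrix (Fin d × Fin d) (Fin d × Fin d) ℂ} (hρ : SchmidtNumberLE d ρ n)
    (A B : Matrix (Fin d) (Fin d) ℂ) :
    SchmidtNumberLE d ((A ⊗ₖ B) * ρ * (A ⊗ₖ B)ᴴ) n := by
  obtain ⟨k, w, hw, rfl⟩ := hρ
  refine ⟨k, fun i => (A ⊗ₖ B) *ᵥ w i, fun i => ?_, ?_⟩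
  · rw [toMat_kronecker_mulVec]
    exact (rank_mul_le_left _ _).trans ((rank_mul_le_right _ _).trans (hw i))
  · simp only [Finset.mul_sum, Finset.sum_mul, mul_vecMulVec, vecMulVec_mul, star_mulVec]

lemma SchmidtNumberLE.diagonal_kronecker {ρ : Matrix (Fin d × Fin d) (Fin d × Fin d) ℂ}
    (hρ : SchmidtNumberLE d ρ n) (x y : Fin d → ℂ) :
    SchmidtNumberLE d
      (of fun p q => x p.1 * y p.2 * star (x q.1 * y q.2) * ρ p q) n := by
  convert hρ.kronecker_mul_mul_conjTranspose (diagonal x) (diagonal y) using 1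
  ext p q
  rw [diagonal_kronecker_diagonal, diagonal_conjTranspose, mul_diagonal, diagonal_mul]
  simp only [of_apply, Pi.star_apply]
  ring

/-- The convex cone of matrices of Schmidt number at most `n`. -/
def schmidtCone (d n : ℕ) : PointedCone ℝ (Matrix (Fin d × Fin d) (Fin d × Fin d) ℂ) where
  carrier := {ρ | SchmidtNumberLE d ρ n}
  zero_mem' := ⟨0, Fin.elim0, fun i => i.elim0, by simp⟩
  add_mem' := by
    rintro _ _ ⟨k, w, hw, rfl⟩ ⟨l, v, hv, rfl⟩
    refine ⟨k + l, Fin.append w v, fun i => ?_, by simp [Fin.sum_univ_add]⟩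
    refine Fin.addCases (fun i => ?_) (fun i => ?_) i
    · simpa using hw i
    · simpa using hv i
  smul_mem' := by
    rintro ⟨c, hc⟩ ρ hρ
    have hscale : c • ρ = of fun p q => ((√c : ℝ) : ℂ) * 1 * star (((√c : ℝ) : ℂ) * 1) * ρ p q := by
      ext p q
      simp [← Complex.ofReal_mul, Real.mul_self_sqrt hc]
    rw [Nonneg.mk_smul, hscale]
    exact SchmidtNumberLE.diagonal_kronecker hρ (fun _ => ((√c : ℝ) : ℂ)) 1

lemma mem_schmidtCone {ρ : Matrix (Fin d × Fin d) (Fin d × Fin d) ℂ} :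
    ρ ∈ schmidtCone d n ↔ SchmidtNumberLE d ρ n := Iff.rfl

lemma expect_mem_pointedCone {E κ : Type*} [AddCommGroup E] [Module ℝ E] [Module ℚ≥0 E]
    (C : PointedCone ℝ E) (s : Finset κ) {x : κ → E} (hx : ∀ k ∈ s, x k ∈ C) :
    𝔼 k ∈ s, x k ∈ C := by
  rw [Finset.expect, ← NNRat.cast_smul_eq_nnqsmul ℝ]
  exact C.smul_mem (by positivity) (sum_mem hx)

lemma diagonal_mem_schmidtCone (hn : 1 ≤ n) {c : Fin d × Fin d → ℝ} (hc : ∀ p, 0 ≤ c p) :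
    (diagonal fun p => (c p : ℂ)) ∈ schmidtCone d n := by
  have basis_mem (p : Fin d × Fin d) :
      vecMulVec (Pi.single p 1) (star (Pi.single p 1)) ∈ schmidtCone d n := by
    refine SchmidtNumberLE.vecMulVec_self_star (le_trans ?_ hn)
    have hsingle : toMat d (Pi.single p 1) =
        vecMulVec (Pi.single p.1 (1 : ℂ)) (Pi.single p.2 (1 : ℂ)) := by
      ext i j
      simp only [toMat, of_apply, vecMulVec_apply, Pi.single_apply, Prod.ext_iff]
      split_ifs <;> simp_all
    exact hsingle ▸ rank_vecMulVec_le _ _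
  convert sum_mem fun p (_ : p ∈ Finset.univ) => (schmidtCone d n).smul_mem (hc p) (basis_mem p)
  ext q r
  rcases eq_or_ne q r with rfl | hqr
  · simp [Matrix.sum_apply, vecMulVec_apply, Pi.single_apply]
  · simp [Matrix.sum_apply, vecMulVec_apply, Pi.single_apply, hqr]

end SchmidtCone

section PhaseTwirl

variable {d n : ℕ}

lemma expect_stdAddChar_comp {G : Type*} [AddCommGroup G] [Fintype G] {N : ℕ} [NeZero N]
    (φ : G →+ ZMod N) [Decidable (φ = 0)] :
    𝔼 z, (ZMod.stdAddChar (φ z) : ℂ) = if φ = 0 then 1 else 0 := by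
  classical
  have trivial_iff : (ZMod.stdAddChar.compAddMonoidHom φ : AddChar G ℂ) = 0 ↔ φ = 0 := by
    rw [AddChar.eq_zero_iff, DFunLike.ext_iff]
    refine forall_congr' fun z => ?_
    rw [AddChar.compAddMonoidHom_apply, AddMonoidHom.zero_apply,
      ← AddChar.map_zero_eq_one (ZMod.stdAddChar (N := N)), ZMod.injective_stdAddChar.eq_iff]
  simpa only [AddChar.compAddMonoidHom_apply, trivial_iff] using
    AddChar.expect_eq_ite (ZMod.stdAddChar.compAddMonoidHom φ : AddChar G ℂ)

-- Signs `z : ι → ZMod 2` would not do: the pairs with `i = l` and `j = k` would survive as well.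
lemma forall_phase_eq_zero_iff {ι : Type*} {i j k l : ι} :
    (∀ z : ι → ZMod 3, z i - z j - (z k - z l) = 0) ↔ (i, j) = (k, l) ∨ i = j ∧ k = l := by
  classical
  refine ⟨fun h => ?_, ?_⟩
  · have h_at_i := h (Pi.single i 1)
    have h_at_l := h (Pi.single l 1)
    by_cases hij : i = j
    · subst hij
      refine Or.inr ⟨rfl, by_contra fun hkl => ?_⟩
      simp [hkl] at h_at_l
    by_cases hik : i = k
    · subst hik
      refine Or.inl (congrArg _ (by_contra fun hjl => ?_))
      simp [hjl] at h_at_l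
    simp only [Pi.single_apply, Ne.symm hij, Ne.symm hik, if_true, if_false] at h_at_i
    split_ifs at h_at_i <;> exact absurd h_at_i (by decide)
  · rintro (h | ⟨rfl, rfl⟩) z
    · obtain ⟨rfl, rfl⟩ := Prod.mk.inj h
      exact sub_self _
    · simp

lemma expect_phase {ι : Type*} [Fintype ι] [DecidableEq ι] (i j k l : ι) :
    𝔼 z : ι → ZMod 3, (ZMod.stdAddChar (z i - z j - (z k - z l)) : ℂ) =
      if (i, j) = (k, l) ∨ i = j ∧ k = l then 1 else 0 := by
  classical
  let coord (a : ι) : (ι → ZMod 3) →+ ZMod 3 := Pi.evalAddMonoidHom (fun _ => ZMod 3) a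
  have h := expect_stdAddChar_comp (coord i - coord j - (coord k - coord l))
  simp only [DFunLike.ext_iff] at h
  exact h.trans (if_congr forall_phase_eq_zero_iff rfl rfl)

lemma phaseTwirl_mem_schmidtCone {ρ : Matrix (Fin d × Fin d) (Fin d × Fin d) ℂ}
    (hρ : ρ ∈ schmidtCone d n) :
    (of fun p q => if p = q ∨ p.1 = p.2 ∧ q.1 = q.2 then ρ p q else 0) ∈ schmidtCone d n := by
  let u (z : Fin d → ZMod 3) (i : Fin d) : ℂ := ZMod.stdAddChar (z i)
  have average_mem := expect_mem_pointedCone (schmidtCone d n) Finset.univ fun z _ =>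
    mem_schmidtCone.2 <| (mem_schmidtCone.1 hρ).diagonal_kronecker (u z) (star (u z))
  convert average_mem using 1
  ext p q
  have phases (z : Fin d → ZMod 3) :
      u z p.1 * star (u z) p.2 * star (u z q.1 * star (u z) q.2) =
        ZMod.stdAddChar (z p.1 - z p.2 - (z q.1 - z q.2)) := by
    simp only [u, Pi.star_apply, RCLike.star_def,
      ← AddChar.map_neg_eq_conj, ← AddChar.map_add_eq_mul]
    congr 1
    ring
  have entry_expect (M : (Fin d → ZMod 3) → Matrix (Fin d × Fin d) (Fin d × Fin d) ℂ) :
      (𝔼 z, M z) p q = 𝔼 z, M z p q :=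
    map_expect (entryLinearMap ℚ≥0 ℂ p q) M Finset.univ
  simp only [entry_expect, of_apply, phases]
  rw [← Finset.expect_mul, expect_phase, ite_mul, one_mul, zero_mul]

end PhaseTwirl

section ClduiCone

variable {d n : ℕ}

/-- The conjugate local diagonal unitary invariant matrix
`∑ i j, G i j • |ii⟩⟨jj| + ∑ i ≠ j, F i j • |ij⟩⟨ij|`, as a linear function of the pair `(G, F)`;
the diagonal of `F` is ignored. -/
noncomputable def cldui (d : ℕ) : (Fin d → Fin d → ℝ) × (Fin d → Fin d → ℝ) →ₗ[ℝ]
    Matrix (Fin d × Fin d) (Fin d × Fin d) ℂ where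
  toFun GF := of fun p q =>
    if p.1 = p.2 ∧ q.1 = q.2 then (GF.1 p.1 q.1 : ℂ) else if p = q then (GF.2 p.1 p.2 : ℂ) else 0
  map_add' GF GF' := by
    ext p q
    simp only [of_apply, Matrix.add_apply]
    split_ifs <;> simp
  map_smul' c GF := by
    ext p q
    simp only [of_apply, Matrix.smul_apply]
    split_ifs <;> simp

lemma cldui_apply (G F : Fin d → Fin d → ℝ) (p q : Fin d × Fin d) :
    cldui d (G, F) p q = if p.1 = p.2 ∧ q.1 = q.2 then (G p.1 q.1 : ℂ)
      else if p = q then (F p.1 p.2 : ℂ) else 0 := rfl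

/-- The convex cone of pairs `(G, F)` whose matrix `cldui d (G, F)` has Schmidt number at
most `n`. -/
noncomputable def clduiCone (d n : ℕ) : PointedCone ℝ ((Fin d → Fin d → ℝ) × (Fin d → Fin d → ℝ)) :=
  (schmidtCone d n).comap (cldui d)

lemma mem_clduiCone {GF : (Fin d → Fin d → ℝ) × (Fin d → Fin d → ℝ)} :
    GF ∈ clduiCone d n ↔ cldui d GF ∈ schmidtCone d n := Iff.rfl

lemma mem_clduiCone_of_le (hn : 1 ≤ n) {G G' F F' : Fin d → Fin d → ℝ} (h : (G, F) ∈ clduiCone d n)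
    (hG : ∀ i j, i ≠ j → G' i j = G i j) (hG_diag : ∀ i, G i i ≤ G' i i)
    (hF : ∀ i j, i ≠ j → F i j ≤ F' i j) : (G', F') ∈ clduiCone d n := by
  let excess (p : Fin d × Fin d) : ℝ :=
    if p.1 = p.2 then G' p.1 p.1 - G p.1 p.1 else F' p.1 p.2 - F p.1 p.2
  have excess_nonneg (p : Fin d × Fin d) : 0 ≤ excess p := by
    by_cases hp : p.1 = p.2
    · simp [excess, hp, hG_diag]
    · simp [excess, hp, hF]
  have decomposition : cldui d (G', F') = cldui d (G, F) + diagonal fun p => (excess p : ℂ) := by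
    ext ⟨i, j⟩ ⟨k, l⟩
    rw [Matrix.add_apply, cldui_apply, cldui_apply]
    by_cases hp : (i, j) = (k, l)
    · obtain ⟨rfl, rfl⟩ := Prod.mk.inj hp
      by_cases hij : i = j <;> simp [excess, hij]
    · rw [diagonal_apply_ne _ hp, add_zero]
      split_ifs with hdiag
      · obtain ⟨rfl, rfl⟩ : i = j ∧ k = l := hdiag
        rw [hG i k fun hik => hp (by rw [hik])]
      · rfl
  rw [mem_clduiCone, decomposition]
  exact add_mem (mem_clduiCone.1 h) (diagonal_mem_schmidtCone hn excess_nonneg)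

lemma filter_mem_clduiCone {G F : Fin d → Fin d → ℝ} (h : (G, F) ∈ clduiCone d n) {s : Fin d → ℝ}
    (hs : ∀ i, 0 ≤ s i) :
    (fun i j => s i * s j * G i j, fun i j => s i * s j * F i j) ∈ clduiCone d n := by
  let r (i : Fin d) : ℂ := ((√(s i) : ℝ) : ℂ)
  have r_mul_self (i : Fin d) : r i * r i = (s i : ℂ) := by
    rw [← Complex.ofReal_mul, Real.mul_self_sqrt (hs i)]
  have r_star (i : Fin d) : star (r i) = r i := Complex.conj_ofReal _
  have filtered := (mem_schmidtCone.1 (mem_clduiCone.1 h)).diagonal_kronecker r r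
  rw [mem_clduiCone, mem_schmidtCone]
  convert filtered using 1
  ext ⟨i, j⟩ ⟨k, l⟩
  rw [of_apply, cldui_apply, cldui_apply]
  split_ifs with hdiag hp
  · obtain ⟨rfl, rfl⟩ : i = j ∧ k = l := hdiag
    simp [r_mul_self]
  · obtain ⟨rfl, rfl⟩ := Prod.mk.inj hp
    simp [r_star, mul_mul_mul_comm, r_mul_self]
  · simp

lemma twirl_mem_clduiCone {M : Matrix (Fin d) (Fin d) ℂ} (hM : M.rank ≤ n) {m : Fin d → ℝ}
    (hm : ∀ i, M i i = m i) :
    (fun i j => m i * m j, fun i j => ‖M i j‖ ^ 2) ∈ clduiCone d n := by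
  have twirled := phaseTwirl_mem_schmidtCone <| mem_schmidtCone.2 <|
    SchmidtNumberLE.vecMulVec_self_star (d := d) (w := fun p => M p.1 p.2) hM
  rw [mem_clduiCone]
  convert twirled using 1
  ext ⟨i, j⟩ ⟨k, l⟩
  rw [cldui_apply]
  split_ifs with hdiag hp
  · obtain ⟨rfl, rfl⟩ : i = j ∧ k = l := hdiag
    simp [vecMulVec_apply, hm]
  · obtain ⟨rfl, rfl⟩ := Prod.mk.inj hp
    simp [vecMulVec_apply, Complex.mul_conj']
  · simp_all

lemma expect_prodMk {κ ι : Type*} (s : Finset κ) (G F : κ → ι → ι → ℝ) :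
    𝔼 k ∈ s, (G k, F k) = (fun i j => 𝔼 k ∈ s, G k i j, fun i j => 𝔼 k ∈ s, F k i j) :=
  Prod.ext
    ((map_expect (LinearMap.fst ℚ≥0 (ι → ι → ℝ) (ι → ι → ℝ)) _ s).trans (by ext; simp))
    ((map_expect (LinearMap.snd ℚ≥0 (ι → ι → ℝ) (ι → ι → ℝ)) _ s).trans (by ext; simp))

lemma expect_twirl_mem_clduiCone {κ : Type*} [Fintype κ] {M : Matrix (Fin d) (Fin d) ℂ}
    (hM : M.rank ≤ n) {m : Fin d → ℝ} (hm : ∀ i, M i i = m i) (σ : κ → Equiv.Perm (Fin d)) :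
    (fun i j => 𝔼 s, m (σ s i) * m (σ s j), fun i j => 𝔼 s, ‖M (σ s i) (σ s j)‖ ^ 2) ∈
      clduiCone d n := by
  have average_mem := expect_mem_pointedCone (clduiCone d n) Finset.univ fun s _ =>
    twirl_mem_clduiCone (M := M.submatrix (σ s) (σ s)) (n := n) (m := m ∘ σ s)
      ((rank_submatrix M (σ s) (σ s)).trans_le hM) fun i => hm (σ s i)
  rwa [expect_prodMk] at average_mem

lemma vecMulVec_ketDiag_add_smul_one (a : Fin d → ℝ) (c : ℝ) :
    vecMulVec (ketDiag d a) (star (ketDiag d a)) + c • 1 =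
      cldui d (fun i j => a i * a j + if i = j then c else 0, fun _ _ => c) := by
  ext ⟨i, j⟩ ⟨k, l⟩
  rw [cldui_apply]
  by_cases hij : i = j <;> by_cases hkl : k = l <;> by_cases hik : i = k <;>
    simp_all [ketDiag, vecMulVec_apply, one_apply]

end ClduiCone

section Isotropic

variable {d n : ℕ}

/-- The least weight of white noise whose addition to `∑ i j, |ii⟩⟨jj|` gives Schmidt number at
most `n`. -/
noncomputable def isotropicNoise (d n : ℕ) : ℝ := (d - n) / (d * n - 1)

lemma mul_sub_one_pos (hd : 2 ≤ d) (hn : 1 ≤ n) : (0 : ℝ) < d * n - 1 := by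
  have hd : (2 : ℝ) ≤ d := by exact_mod_cast hd
  have hn : (1 : ℝ) ≤ n := by exact_mod_cast hn
  nlinarith

lemma isotropicNoise_nonneg (hd : 2 ≤ d) (hn : 1 ≤ n) (hnd : n ≤ d) : 0 ≤ isotropicNoise d n :=
  div_nonneg (sub_nonneg.2 (by exact_mod_cast hnd)) (mul_sub_one_pos hd hn).le

lemma natCast_sub_one_ne_zero_of_ne {i j : Fin d} (hij : i ≠ j) : (d : ℝ) - 1 ≠ 0 := by
  have hd : 2 ≤ d := Fin.nontrivial_iff_two_le.1 ⟨i, j, hij⟩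
  exact sub_ne_zero.2 (by exact_mod_cast (show d ≠ 1 by omega))

lemma flat_mem_clduiCone (hn : 1 ≤ n) (hnd : n ≤ d) :
    (1, fun _ _ => ((d : ℝ) - n) / (n * (d - 1))) ∈ clduiCone d n := by
  have hn0 : (n : ℝ) ≠ 0 := by positivity
  have : NeZero d := ⟨by omega⟩
  obtain ⟨X, hX⟩ := exists_isFlatFrame (α := Fin d) (κ := Fin n) (μ := fun _ => (n : ℝ)⁻¹)
    (by simpa using hnd) fun _ => by positivity
  have hμ : ∑ _k : Fin n, (n : ℝ)⁻¹ = 1 := by simp [hn0]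
  refine mem_clduiCone_of_le hn
    (expect_twirl_mem_clduiCone (rank_mul_le_left X Xᴴ |>.trans (rank_le_width X)) (m := 1)
      (fun i => by rw [hX.mul_conjTranspose_self_apply_self, hμ]; rfl) id) ?_ ?_ ?_
  · simp
  · simp
  · intro i j hij
    have hd1 := natCast_sub_one_ne_zero_of_ne hij
    refine (hX.expect_perm_norm_sq hμ hij).trans_le (le_of_eq ?_)
    rw [Finset.sum_const, Finset.card_univ, Fintype.card_fin, Fintype.card_fin, nsmul_eq_mul]
    field_simp

lemma support_mem_clduiCone (hn : 1 ≤ n) (hnd : n ≤ d) :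
    (fun i j => if i = j then (d : ℝ) - 1 else n - 1, 0) ∈ clduiCone d n := by
  have hn0 : (n : ℝ) ≠ 0 := by positivity
  have hd0 : (d : ℝ) ≠ 0 := by exact_mod_cast (show d ≠ 0 by omega)
  obtain ⟨S, -, hS⟩ := Finset.exists_subset_card_eq (s := (Finset.univ : Finset (Fin d))) (n := n)
    (by simpa using hnd)
  let m (i : Fin d) : ℝ := if i ∈ S then 1 else 0
  have m_mul_self (i : Fin d) : m i * m i = m i := by simp [m]
  have sum_m : ∑ i, m i = n := by simp [m, hS]
  have rank_m : (diagonal fun i => (m i : ℂ)).rank ≤ n := by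
    rw [rank_diagonal, Fintype.card_subtype, ← hS]
    simp [m]
  have scale_nonneg : 0 ≤ (d : ℝ) * (d - 1) / n := 
    div_nonneg (mul_nonneg d.cast_nonneg
      (sub_nonneg.2 (by exact_mod_cast hn.trans hnd))) n.cast_nonneg
  have scaled := (clduiCone d n).smul_mem scale_nonneg
    (expect_twirl_mem_clduiCone rank_m (m := m) (fun i => diagonal_apply_eq _ i) id)
  refine mem_clduiCone_of_le hn scaled ?_ ?_ ?_
  · intro i j hij
    have hd1 := natCast_sub_one_ne_zero_of_ne hij
    change _ = (d : ℝ) * (d - 1) / n * 𝔼 σ : Equiv.Perm (Fin d), m (σ i) * m (σ j)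
    rw [if_neg hij, expect_perm_apply_apply (fun a b => m a * m b) hij,
      expect_offDiag fun a b => m a * m b]
    simp only [m_mul_self, ← Finset.mul_sum, ← Finset.sum_mul, sum_m, Fintype.card_fin]
    field_simp
  · intro i
    change (d : ℝ) * (d - 1) / n * 𝔼 σ : Equiv.Perm (Fin d), m (σ i) * m (σ i) ≤ _
    rw [if_pos rfl]
    simp only [m_mul_self]
    rw [expect_perm_apply, Fintype.expect_eq_sum_div_card, sum_m, Fintype.card_fin]
    exact le_of_eq (by field_simp)
  · intro i j hij
    simp [hij]

lemma isotropic_mem_clduiCone (hd : 2 ≤ d) (hn : 1 ≤ n) (hnd : n ≤ d) :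
    (fun i j => 1 + if i = j then isotropicNoise d n else 0, fun _ _ => isotropicNoise d n) ∈
      clduiCone d n := by
  have hQ := mul_sub_one_pos hd hn
  have hn0 : (n : ℝ) ≠ 0 := by positivity
  have hd1 : (0 : ℝ) < d - 1 := sub_pos.2 (by exact_mod_cast hd)
  have flat := (clduiCone d n).smul_mem
    (show 0 ≤ (n : ℝ) * (d - 1) / (d * n - 1) by positivity) (flat_mem_clduiCone hn hnd)
  have support := (clduiCone d n).smul_mem
    (show 0 ≤ ((d : ℝ) * n - 1)⁻¹ by positivity) (support_mem_clduiCone hn hnd)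
  convert add_mem flat support using 1
  refine Prod.ext ?_ ?_ <;> ext i j
  · change 1 + (if i = j then isotropicNoise d n else 0) =
      (n : ℝ) * (d - 1) / (d * n - 1) * 1 +
        ((d : ℝ) * n - 1)⁻¹ * if i = j then (d : ℝ) - 1 else n - 1
    rw [mul_one, inv_mul_eq_div, ← add_div, eq_div_iff hQ.ne', add_mul, ite_mul, zero_mul,
      isotropicNoise, div_mul_cancel₀ _ hQ.ne']
    split_ifs <;> ring
  · change isotropicNoise d n =
      (n : ℝ) * (d - 1) / (d * n - 1) * ((d - n) / (n * (d - 1))) + ((d : ℝ) * n - 1)⁻¹ * 0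
    rw [isotropicNoise]
    field_simp
    ring

end Isotropic

section PinRow

variable {ι κ : Type*} [DecidableEq ι] [DecidableEq κ]

/-- The matrix `X` with the `k₀`-th standard basis vector inserted as an additional row at `i₀`. -/
def pinRow (i₀ : ι) (k₀ : κ) (X : Matrix {i // i ≠ i₀} κ ℂ) : Matrix ι κ ℂ :=
  of fun i => if h : i = i₀ then Pi.single k₀ 1 else X ⟨i, h⟩

variable {i₀ : ι} {k₀ : κ} {X : Matrix {i // i ≠ i₀} κ ℂ}

lemma pinRow_apply_self : pinRow i₀ k₀ X i₀ = Pi.single k₀ 1 := dif_pos rfl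

lemma pinRow_apply_coe (i : {i // i ≠ i₀}) : pinRow i₀ k₀ X i = X i := dif_neg i.2

variable [Fintype κ]

lemma pinRow_gram_apply_self_self :
    (pinRow i₀ k₀ X * (pinRow i₀ k₀ X)ᴴ) i₀ i₀ = 1 := by
  simp [mul_apply, conjTranspose_apply, pinRow_apply_self, Pi.single_apply]

lemma pinRow_gram_apply_coe_coe (i j : {i // i ≠ i₀}) :
    (pinRow i₀ k₀ X * (pinRow i₀ k₀ X)ᴴ) i j = (X * Xᴴ) i j := by
  simp [mul_apply, conjTranspose_apply, pinRow_apply_coe]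

lemma pinRow_gram_apply_coe_self (i : {i // i ≠ i₀}) :
    (pinRow i₀ k₀ X * (pinRow i₀ k₀ X)ᴴ) i i₀ = X i k₀ := by
  simp [mul_apply, conjTranspose_apply, pinRow_apply_self, pinRow_apply_coe, Pi.single_apply]

lemma pinRow_gram_apply_self_coe (i : {i // i ≠ i₀}) :
    (pinRow i₀ k₀ X * (pinRow i₀ k₀ X)ᴴ) i₀ i = star (X i k₀) := by
  rw [← (isHermitian_mul_conjTranspose_self (pinRow i₀ k₀ X)).apply, pinRow_gram_apply_coe_self]

lemma IsFlatFrame.pinRow_gram_apply_diag [Fintype ι] {μ : κ → ℝ} (hX : IsFlatFrame X μ)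
    (hμ : ∑ k, μ k = 1) (i : ι) : (pinRow i₀ k₀ X * (pinRow i₀ k₀ X)ᴴ) i i = 1 := by
  rcases eq_or_ne i i₀ with rfl | hi
  · exact pinRow_gram_apply_self_self
  · lift i to {i // i ≠ i₀} using hi
    rw [pinRow_gram_apply_coe_coe, hX.mul_conjTranspose_self_apply_self, hμ, Complex.ofReal_one]

end PinRow

section Pinned

variable {d n : ℕ}

/-- A probability vector on `Fin n` that is uniform off `k₀`, where it takes the value
`isotropicNoise d n`. -/
noncomputable def pinnedWeight (d : ℕ) {n : ℕ} (k₀ : Fin n) : Fin n → ℝ :=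
  Function.update (fun _ => (d + 1) / (d * n - 1)) k₀ (isotropicNoise d n)

lemma sum_comp_update_const {κ : Type*} [Fintype κ] [DecidableEq κ] (g : ℝ → ℝ) (k₀ : κ)
    (x y : ℝ) :
    ∑ k, g (Function.update (fun _ => y) k₀ x k) = g x + (Fintype.card κ - 1) * g y := by
  have : Nonempty κ := ⟨k₀⟩
  rw [← Finset.add_sum_erase _ _ (Finset.mem_univ k₀), Function.update_self,
    Finset.sum_congr rfl fun k hk => by rw [Function.update_of_ne (Finset.ne_of_mem_erase hk)]]
  simp [Nat.cast_sub Fintype.card_pos]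

lemma pinnedWeight_nonneg (hd : 2 ≤ d) (hnd : n ≤ d) (k₀ k : Fin n) :
    0 ≤ pinnedWeight d k₀ k := by
  have hn : 1 ≤ n := k₀.pos
  rcases eq_or_ne k k₀ with rfl | hk
  · rw [pinnedWeight, Function.update_self]
    exact isotropicNoise_nonneg hd hn hnd
  · rw [pinnedWeight, Function.update_of_ne hk]
    have := mul_sub_one_pos hd hn
    positivity

lemma sum_pinnedWeight (hd : 2 ≤ d) (k₀ : Fin n) : ∑ k, pinnedWeight d k₀ k = 1 := by
  have hQ := mul_sub_one_pos hd k₀.pos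
  simp only [pinnedWeight]
  rw [sum_comp_update_const fun x => x, Fintype.card_fin, isotropicNoise, mul_div_assoc',
    ← add_div, div_eq_one_iff_eq hQ.ne']
  ring

lemma sum_pinnedWeight_sq (hd : 2 ≤ d) (k₀ : Fin n) :
    (d - 1) * ∑ k, pinnedWeight d k₀ k ^ 2 - 1 =
      isotropicNoise d n * (d - 1 - isotropicNoise d n) := by
  have hQ := mul_sub_one_pos hd k₀.pos
  simp only [pinnedWeight]
  rw [sum_comp_update_const fun x => x ^ 2, Fintype.card_fin, isotropicNoise]
  field_simp
  ring

lemma pinned_overlap_le (hd : 3 ≤ d) (hnd : n ≤ d) (k₀ : Fin n) :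
    (((d : ℝ) - 1) * ∑ k, pinnedWeight d k₀ k ^ 2 - 1) / ((d : ℝ) - 1 - 1) ≤
      2 * isotropicNoise d n := by
  have hc : 0 ≤ isotropicNoise d n := isotropicNoise_nonneg (by omega) k₀.pos hnd
  have hd : (3 : ℝ) ≤ d := by exact_mod_cast hd
  rw [sum_pinnedWeight_sq (by omega), div_le_iff₀ (by linarith), mul_comm 2, mul_assoc]
  exact mul_le_mul_of_nonneg_left (by linarith) hc

lemma pinned_mem_clduiCone (hn : 1 ≤ n) (hnd : n < d) (i₀ : Fin d) :
    (1, fun i j => if i = i₀ ∨ j = i₀ then isotropicNoise d n else 2 * isotropicNoise d n) ∈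
      clduiCone d n := by
  have hd : 2 ≤ d := by omega
  let k₀ : Fin n := ⟨0, hn⟩
  have hμ := sum_pinnedWeight hd k₀
  have card_ne : Fintype.card {i // i ≠ i₀} = d - 1 := by simp
  have : Nonempty {i // i ≠ i₀} := Fintype.card_pos_iff.1 (by omega)
  obtain ⟨X, hX⟩ := exists_isFlatFrame (α := {i // i ≠ i₀})
    (by rw [card_ne, Fintype.card_fin]; omega) (pinnedWeight_nonneg hd hnd.le k₀)
  have norm_sq_pinned (i : {i // i ≠ i₀}) : ‖X i k₀‖ ^ 2 = isotropicNoise d n :=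
    (hX.norm_sq_apply i k₀).trans (Function.update_self ..)
  refine mem_clduiCone_of_le hn (expect_twirl_mem_clduiCone
    ((rank_mul_le_left (pinRow i₀ k₀ X) _).trans (rank_le_width _)) (m := 1)
    (fun i => by simpa using hX.pinRow_gram_apply_diag hμ i)
    (Equiv.Perm.ofSubtype : Equiv.Perm {i // i ≠ i₀} →* Equiv.Perm (Fin d))) ?_ ?_ ?_
  · simp
  · simp
  · intro i j hij
    have fix (σ : Equiv.Perm {i // i ≠ i₀}) : Equiv.Perm.ofSubtype σ i₀ = i₀ :=
      Equiv.Perm.ofSubtype_apply_of_not_mem σ (by simp)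
    rcases eq_or_ne i i₀ with rfl | hi
    · lift j to {j // j ≠ i} using hij.symm
      simp [fix, Equiv.Perm.ofSubtype_apply_coe, pinRow_gram_apply_self_coe, norm_sq_pinned]
    lift i to {i // i ≠ i₀} using hi
    rcases eq_or_ne j i₀ with rfl | hj
    · simp [fix, Equiv.Perm.ofSubtype_apply_coe, pinRow_gram_apply_coe_self, norm_sq_pinned]
    lift j to {j // j ≠ i₀} using hj
    have hij : i ≠ j := fun h => hij (congrArg _ h)
    have hd3 : 3 ≤ d := by
      have := Fintype.one_lt_card_iff.2 ⟨i, j, hij⟩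
      omega
    simp only [Equiv.Perm.ofSubtype_apply_coe, pinRow_gram_apply_coe_coe]
    rw [hX.expect_perm_norm_sq hμ hij, card_ne, Nat.cast_sub (by omega), Nat.cast_one,
      if_neg (by simp [i.2, j.2])]
    exact pinned_overlap_le hd3 hnd.le k₀

end Pinned

lemma mixture_mem_clduiCone {d n : ℕ} (hn : 1 ≤ n) (hnd : n < d) (i₀ : Fin d) {t : ℝ}
    (ht : 0 ≤ t) (ht1 : t ≤ 1) :
    (fun i j => 1 + if i = j then t * isotropicNoise d n else 0,
      fun i j => if i = i₀ ∨ j = i₀ then isotropicNoise d n else (2 - t) * isotropicNoise d n) ∈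
      clduiCone d n := by
  have isotropic := (clduiCone d n).smul_mem ht (isotropic_mem_clduiCone (by omega) hn hnd.le)
  have pinned := (clduiCone d n).smul_mem (sub_nonneg.2 ht1) (pinned_mem_clduiCone hn hnd i₀)
  convert add_mem isotropic pinned using 1
  refine Prod.ext ?_ ?_ <;> ext i j
  · change (1 + if i = j then t * isotropicNoise d n else 0) =
      t * (1 + if i = j then isotropicNoise d n else 0) + (1 - t) * 1
    split_ifs <;> ring
  · change (if i = i₀ ∨ j = i₀ then isotropicNoise d n else (2 - t) * isotropicNoise d n) =
      t * isotropicNoise d n + (1 - t) *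
        if i = i₀ ∨ j = i₀ then isotropicNoise d n else 2 * isotropicNoise d n
    split_ifs <;> ring

lemma rankOne_mem_clduiCone {d n : ℕ} (hn : 1 ≤ n) (hnd : n < d) {a : Fin d → ℝ}
    (ha : ∀ i, 0 ≤ a i) (i₀ : Fin d) {t : ℝ} (ht : 0 ≤ t) (ht1 : t ≤ 1)
    (hle : ∀ i, i ≠ i₀ → a i ≤ a i₀ * t) :
    (fun i j => a i * a j + if i = j then a i₀ * (a i₀ * t) * isotropicNoise d n else 0,
      fun _ _ => a i₀ * (a i₀ * t) * isotropicNoise d n) ∈ clduiCone d n := by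
  have hc : 0 ≤ isotropicNoise d n := isotropicNoise_nonneg (by omega) hn hnd.le
  have hb : 0 ≤ a i₀ * t := mul_nonneg (ha i₀) ht
  have le_top (i : Fin d) : a i ≤ a i₀ := by
    rcases eq_or_ne i i₀ with rfl | hi
    exacts [le_rfl, (hle i hi).trans (mul_le_of_le_one_right (ha i₀) ht1)]
  refine mem_clduiCone_of_le hn (filter_mem_clduiCone (mixture_mem_clduiCone hn hnd i₀ ht ht1) ha)
    (fun i j hij => by simp [hij]) (fun i => ?_) fun i j hij => ?_
  · have := mul_le_mul_of_nonneg_right (mul_self_le_mul_self (ha i) (le_top i))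
      (mul_nonneg ht hc)
    simp only [if_true]
    linarith
  · split_ifs with hpin
    · rcases hpin with rfl | rfl
      · exact mul_le_mul_of_nonneg_right (mul_le_mul_of_nonneg_left (hle j hij.symm) (ha i)) hc
      · rw [mul_comm (a i)]
        exact mul_le_mul_of_nonneg_right (mul_le_mul_of_nonneg_left (hle i hij) (ha j)) hc
    · push Not at hpin
      calc a i * a j * ((2 - t) * isotropicNoise d n)
          ≤ (a i₀ * t) * (a i₀ * t) * ((2 - t) * isotropicNoise d n) := by
            refine mul_le_mul_of_nonneg_right
              (mul_le_mul (hle i hpin.1) (hle j hpin.2) (ha j) hb)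
              (mul_nonneg (by linarith) hc)
        _ = t * (2 - t) * (a i₀ * (a i₀ * t) * isotropicNoise d n) := by ring
        _ ≤ a i₀ * (a i₀ * t) * isotropicNoise d n :=
            mul_le_of_le_one_left (mul_nonneg (mul_nonneg (ha i₀) hb) hc)
              (by nlinarith [sq_nonneg (1 - t)])

theorem upper_bound_random_schmidt_robustness_general (d n : ℕ) (hn : 1 ≤ n) (hnd : n < d)
    (a : Fin d → ℝ) (ha : ∀ i, 0 ≤ a i) (i₀ : Fin d) (b : ℝ) (hb : b ≤ a i₀)
    (hle : ∀ i, i ≠ i₀ → a i ≤ b) :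
    SchmidtNumberLE d
      (Matrix.vecMulVec (ketDiag d a) (star (ketDiag d a)) +
        (a i₀ * b * (((d : ℝ) - n) / ((d : ℝ) * n - 1))) •
          (1 : Matrix (Fin d × Fin d) (Fin d × Fin d) ℂ)) n := by
  have hb0 : 0 ≤ b := by
    have : Nontrivial (Fin d) := Fin.nontrivial_iff_two_le.2 (by omega)
    obtain ⟨i, hi⟩ := exists_ne i₀
    exact (ha i).trans (hle i hi)
  obtain ⟨t, ht, ht1, rfl⟩ : ∃ t, 0 ≤ t ∧ t ≤ 1 ∧ b = a i₀ * t :=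
    ⟨b / a i₀, div_nonneg hb0 (ha i₀), div_le_one_of_le₀ hb (ha i₀),
      (mul_div_cancel_of_imp' fun h => (hb.trans h.le).antisymm hb0).symm⟩
  rw [vecMulVec_ketDiag_add_smul_one]
  exact rankOne_mem_clduiCone hn hnd ha i₀ ht ht1 hle

/-- Upper bound to the random Schmidt robustness:
`ψψᴴ + (a₁a₂(d-n)/(dn-1)) 𝟙` has Schmidt number at most `n`. -/
theorem upper_bound_random_schmidt_robustness (d n : ℕ) (hd : 2 ≤ d) (hn : 1 ≤ n)
    (hnd : n < d) (a : Fin d → ℝ) (ha : ∀ i, 0 ≤ a i)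
    (hord : ∀ i j : Fin d, i ≤ j → a j ≤ a i) (hnorm : ∑ i, a i ^ 2 = 1) :
    SchmidtNumberLE d
      (Matrix.vecMulVec (ketDiag d a) (star (ketDiag d a)) +
        (a ⟨0, by omega⟩ * a ⟨1, by omega⟩ * (((d : ℝ) - n) / ((d : ℝ) * n - 1))) •
          (1 : Matrix (Fin d × Fin d) (Fin d × Fin d) ℂ)) n := by
  refine upper_bound_random_schmidt_robustness_general d n hn hnd a ha _ _ (hord _ _ ?_)
    fun i hi => hord _ _ ?_
  · exact Fin.mk_le_mk.2 zero_le_one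
  · exact Fin.mk_le_of_le_val (Nat.one_le_iff_ne_zero.2 fun h => hi (Fin.ext h))
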